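/- Let γ ≥ 1/2 be a half-integer and j ∈ {−1/2, 0, 1/2, 1, …} with j > γ − 1. Then for every μ ∈ {−γ, −γ+1, …, γ} and every n ∈ ℕ, the vector (𝒥₊)ⁿ ψ_(μ) ∈ F_γ ⊗ D⁺_j is nonzero. -/

import Mathlib

/-!
The component of a vector along `|γ, -γ⟩ ⊗ |j, m⟩` evolves autonomously under `𝒥₊`: since `J₊ ⊗ 1`
strictly raises the first label, it never contributes to the first label `-γ`, so the coefficient
at `(0, k + 1)` of `𝒥₊ v` is `C₊(j, j+1+k)` times the coefficient at `(0, k)` of `v`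
(`Jp_apply_zero_succ`). These factors are never zero (`Cp_jd_md_ne_zero`), because
`C₊(j, j+1+k) = i √(-(k+1)) √(2j+2+k)` and `2j + 2 = K + 1 > 0`. The vector `ψ_(μ)` has
coefficient `1` at `(0, t)`, hence `(𝒥₊)ⁿ ψ_(μ)` has a nonzero coefficient at `(0, t + n)`.
-/

/-!
Statement 0: lowest weight vectors ψ_(μ) in the coupling F_γ ⊗ D⁺_j for sl(2,ℝ).

Conventions: γ = G/2 with `G : ℕ`, `1 ≤ G`; j = (K-1)/2 with `K : ℕ` (so j ∈ {-1/2,0,1/2,...}).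
The space F_γ ⊗ D⁺_j has basis indexed by `(ν, k) : Fin (G+1) × ℕ`, the basis vector
`single (ν,k) 1` representing |γ, ν-γ⟩ ⊗ |j, j+1+k⟩.
-/

noncomputable section

/-- Principal branch of the complex square root. -/
def csqrt (z : ℂ) : ℂ := z ^ ((1 : ℂ) / 2)

/-- C₊(j,m) = i √(j-m) √(j+m+1). -/
def Cp (j m : ℂ) : ℂ := Complex.I * csqrt (j - m) * csqrt (j + m + 1)

/-- C₋(j,m) = i √(j+m) √(j-m+1). -/
def Cm (j m : ℂ) : ℂ := Complex.I * csqrt (j + m) * csqrt (j - m + 1)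

/-- γ = G/2, as a complex number. -/
def gam (G : ℕ) : ℂ := (G : ℂ) / 2

/-- j = (K-1)/2, as a complex number. -/
def jd (K : ℕ) : ℂ := ((K : ℂ) - 1) / 2

/-- μ = ν - γ for ν : Fin (G+1). -/
def muc (G : ℕ) (ν : Fin (G + 1)) : ℂ := ((ν : ℕ) : ℂ) - gam G

/-- m = j + 1 + k for k : ℕ. -/
def md (K : ℕ) (k : ℕ) : ℂ := jd K + 1 + (k : ℂ)

/-- The vector space F_γ ⊗ D⁺_j. -/
abbrev W (G : ℕ) := (Fin (G + 1) × ℕ) →₀ ℂ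

/-- Basis vector with coefficient, with out-of-range indices giving 0. -/
def eV (G : ℕ) (i k : ℤ) (c : ℂ) : W G :=
  if h : 0 ≤ i ∧ i < (G : ℤ) + 1 ∧ 0 ≤ k then
    Finsupp.single ((⟨i.toNat, by omega⟩ : Fin (G + 1)), k.toNat) c
  else 0

/-- 𝒥₀ = J₀ ⊗ 1 + 1 ⊗ J₀. -/
def J0 (G K : ℕ) : W G →ₗ[ℂ] W G :=
  Finsupp.lsum ℂ fun p => LinearMap.toSpanSingleton ℂ (W G)
    (Finsupp.single p (muc G p.1 + md K p.2))

/-- 𝒥₊ = J₊ ⊗ 1 + 1 ⊗ J₊. -/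
def Jp (G K : ℕ) : W G →ₗ[ℂ] W G :=
  Finsupp.lsum ℂ fun p => LinearMap.toSpanSingleton ℂ (W G)
    (eV G ((p.1 : ℕ) + 1) (p.2 : ℕ) (Cp (gam G) (muc G p.1)) +
      eV G (p.1 : ℕ) ((p.2 : ℕ) + 1) (Cp (jd K) (md K p.2)))

/-- 𝒥₋ = J₋ ⊗ 1 + 1 ⊗ J₋. -/
def Jm (G K : ℕ) : W G →ₗ[ℂ] W G :=
  Finsupp.lsum ℂ fun p => LinearMap.toSpanSingleton ℂ (W G)
    (eV G ((p.1 : ℕ) - 1) (p.2 : ℕ) (Cm (gam G) (muc G p.1)) +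
      eV G (p.1 : ℕ) ((p.2 : ℕ) - 1) (Cm (jd K) (md K p.2)))

/-- The Casimir 𝒬 = -𝒥₀(𝒥₀+1) + 𝒥₋𝒥₊. -/
def Qcas (G K : ℕ) : W G →ₗ[ℂ] W G :=
  -(J0 G K ∘ₗ (J0 G K + LinearMap.id)) + Jm G K ∘ₗ Jp G K

/-- The lowest weight vector ψ_(μ), μ = t - γ:
ψ_(μ) = Σ_{ν=-γ}^{μ} (-1)^{γ+ν} (Π_{σ=-γ}^{ν-1} C₊(j, j+μ-σ)/C₊(γ,σ)) |γ,ν⟩ ⊗ |j, j+1+μ-ν⟩. -/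
def psiLW (G K : ℕ) (t : Fin (G + 1)) : W G :=
  ∑ s ∈ Finset.range (t.1 + 1),
    eV G (s : ℤ) ((t.1 : ℤ) - (s : ℤ))
      ((-1 : ℂ) ^ s *
        ∏ r ∈ Finset.range s,
          Cp (jd K) (jd K + ((t.1 : ℕ) : ℂ) - (r : ℂ)) / Cp (gam G) ((r : ℂ) - gam G))

/-- q_(μ) = -(j+μ)(j+μ+1). -/
def qe (G K : ℕ) (t : Fin (G + 1)) : ℂ :=
  -((jd K + muc G t) * (jd K + muc G t + 1))

theorem csqrt_ne_zero {z : ℂ} (hz : z ≠ 0) : csqrt z ≠ 0 := by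
  unfold csqrt
  rw [Complex.cpow_ne_zero_iff]
  exact Or.inl hz

theorem Cp_jd_md_ne_zero (K k : ℕ) : Cp (jd K) (md K k) ≠ 0 := by
  have h1 : jd K - md K k ≠ 0 := by
    have : jd K - md K k = -((k + 1 : ℕ) : ℂ) := by
      unfold md; push_cast; ring
    rw [this]
    exact neg_ne_zero.mpr (Nat.cast_ne_zero.mpr (by omega))
  have h2 : jd K + md K k + 1 ≠ 0 := by
    have : jd K + md K k + 1 = ((K + k + 1 : ℕ) : ℂ) := by
      unfold md jd; push_cast; ring
    rw [this]
    exact Nat.cast_ne_zero.mpr (by omega)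
  exact mul_ne_zero (mul_ne_zero Complex.I_ne_zero (csqrt_ne_zero h1)) (csqrt_ne_zero h2)

theorem eV_apply (G : ℕ) (i k : ℤ) (c : ℂ) (a : Fin (G + 1)) (b : ℕ) :
    eV G i k c (a, b) = if i = ((a : ℕ) : ℤ) ∧ k = (b : ℤ) then c else 0 := by
  unfold eV
  have ha := a.2
  split_ifs with h h' h'
  · obtain ⟨rfl, rfl⟩ := h'
    simp
  · rw [Finsupp.single_apply, if_neg]
    intro he
    rw [Prod.mk.injEq, Fin.ext_iff] at he
    simp only at he
    omega
  · omega
  · rfl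

/-- On the lowest label of `F_γ` only `1 ⊗ J₊` contributes to `𝒥₊`. -/
theorem Jp_apply_zero_succ (G K : ℕ) (v : W G) (k : ℕ) :
    Jp G K v (0, k + 1) = Cp (jd K) (md K k) * v (0, k) := by
  induction v using Finsupp.induction_linear with
  | zero => simp
  | add f g hf hg => rw [map_add, Finsupp.add_apply, hf, hg, Finsupp.add_apply, mul_add]
  | single p c =>
    obtain ⟨a, b⟩ := p
    simp only [Jp, Finsupp.lsum_single, LinearMap.toSpanSingleton_apply, Finsupp.smul_apply,
      Finsupp.add_apply, eV_apply, Finsupp.single_apply, Prod.mk.injEq, Fin.ext_iff]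
    rw [if_neg (by simp; omega)]
    by_cases h : (a : ℕ) = 0 ∧ b = k
    · obtain ⟨h0, rfl⟩ := h
      simp [h0, mul_comm]
    · rw [if_neg, if_neg]
      · simp
      · simpa using h
      · rw [Fin.val_zero]
        omega

theorem psiLW_apply_zero (G K : ℕ) (t : Fin (G + 1)) : psiLW G K t (0, t.1) = 1 := by
  unfold psiLW
  rw [Finsupp.finsetSum_apply, Finset.sum_eq_single 0]
  · simp [eV_apply]
  · intro s _ hs
    rw [eV_apply, if_neg]
    simp [hs]
  · simp

theorem Jp_pow_psiLW_apply_ne_zero (G K : ℕ) (t : Fin (G + 1)) (n : ℕ) :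
    (Jp G K ^ n) (psiLW G K t) (0, t.1 + n) ≠ 0 := by
  induction n with
  | zero => simp [psiLW_apply_zero]
  | succ n ih =>
    rw [pow_succ', Module.End.mul_apply, ← add_assoc, Jp_apply_zero_succ]
    exact mul_ne_zero (Cp_jd_md_ne_zero K _) ih

/-- If j > γ - 1, the repeated action of 𝒥₊ on any lowest weight vector
ψ_(μ) never vanishes. -/
theorem Jp_pow_psiLW_ne_zero (G K : ℕ) (hG : 1 ≤ G)
    (hj : ((K : ℝ) - 1) / 2 > (G : ℝ) / 2 - 1)
    (t : Fin (G + 1)) (n : ℕ) :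
    (Jp G K ^ n) (psiLW G K t) ≠ 0 := by
  intro h
  apply Jp_pow_psiLW_apply_ne_zero G K t n
  rw [h, Finsupp.zero_apply]

end
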